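/- Every deterministic coBüchi automaton that recognises the complement Σ^ω ∖ L_main has at least 66 states. -/

import Mathlib

/-- A (nondeterministic) Büchi/coBüchi automaton: an initial state, a set of
transitions, and a subset of *significant* transitions. -/
structure BuchiAutomaton (σ : Type) (Q : Type) where
  init : Q
  trans : Set (Q × σ × Q)
  sig : Set (Q × σ × Q)
  sig_sub : sig ⊆ trans

namespace BuchiAutomaton

variable {σ Q : Type}

/-- `ρ` is a run of `A` on the infinite word `w`, starting at the state `p`. -/
def IsRunFrom (A : BuchiAutomaton σ Q) (p : Q) (w : ℕ → σ) (ρ : ℕ → Q) : Prop :=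
  ρ 0 = p ∧ ∀ i, (ρ i, w i, ρ (i + 1)) ∈ A.trans

/-- Büchi acceptance: the run contains infinitely many significant transitions. -/
def BuchiAcc (A : BuchiAutomaton σ Q) (w : ℕ → σ) (ρ : ℕ → Q) : Prop :=
  ∀ N, ∃ i, N ≤ i ∧ (ρ i, w i, ρ (i + 1)) ∈ A.sig

/-- coBüchi acceptance: the run contains finitely many significant transitions. -/
def CoBuchiAcc (A : BuchiAutomaton σ Q) (w : ℕ → σ) (ρ : ℕ → Q) : Prop :=
  ∃ N, ∀ i, N ≤ i → (ρ i, w i, ρ (i + 1)) ∉ A.sig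

/-- The language of `A` (as a Büchi automaton), with initial state `p`. -/
def LangFrom (A : BuchiAutomaton σ Q) (p : Q) : Set (ℕ → σ) :=
  {w | ∃ ρ, A.IsRunFrom p w ρ ∧ A.BuchiAcc w ρ}

/-- The language of `A`, read as a Büchi automaton. -/
def Lang (A : BuchiAutomaton σ Q) : Set (ℕ → σ) :=
  A.LangFrom A.init

/-- The language of `A`, read as a coBüchi automaton. -/
def CoLang (A : BuchiAutomaton σ Q) : Set (ℕ → σ) :=
  {w | ∃ ρ, A.IsRunFrom A.init w ρ ∧ A.CoBuchiAcc w ρ}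

/-- `A` is deterministic: at most one outgoing transition per state and letter. -/
def Deterministic (A : BuchiAutomaton σ Q) : Prop :=
  ∀ p a q q', (p, a, q) ∈ A.trans → (p, a, q') ∈ A.trans → q = q'

/-- `FinRun A l p`: `l` is a finite run of `A` from the initial state, ending in
the state `p` (represented as the chronological list of its transitions). -/
inductive FinRun (A : BuchiAutomaton σ Q) : List (Q × σ × Q) → Q → Prop
  | nil : FinRun A [] A.init
  | snoc {l : List (Q × σ × Q)} {p : Q} {a : σ} {q : Q} :
      FinRun A l p → (p, a, q) ∈ A.trans → FinRun A (l ++ [(p, a, q)]) q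

/-- A resolver for `A`: a function from finite runs and letters to transitions,
such that on every finite run from the initial state ending in a state `p` and
every letter `a`, it outputs a transition on `a` with source `p`. -/
structure Resolver (A : BuchiAutomaton σ Q) where
  res : List (Q × σ × Q) → σ → Q × σ × Q
  res_valid : ∀ l p a, A.FinRun l p →
    (res l a).1 = p ∧ (res l a).2.1 = a ∧ res l a ∈ A.trans

/-- The history (finite run) built by a resolver after reading `n` letters of `w`. -/
def Resolver.hist {A : BuchiAutomaton σ Q} (r : Resolver A) (w : ℕ → σ) : ℕ → List (Q × σ × Q)
  | 0 => []
  | n + 1 => r.hist w n ++ [r.res (r.hist w n) (w n)]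

/-- The run induced by the resolver on `w` satisfies the Büchi condition. -/
def Resolver.InducedBuchiAcc {A : BuchiAutomaton σ Q} (r : Resolver A) (w : ℕ → σ) : Prop :=
  ∀ N, ∃ n, N ≤ n ∧ r.res (r.hist w n) (w n) ∈ A.sig

/-- The run induced by the resolver on `w` satisfies the coBüchi condition. -/
def Resolver.InducedCoBuchiAcc {A : BuchiAutomaton σ Q} (r : Resolver A) (w : ℕ → σ) : Prop :=
  ∃ N, ∀ n, N ≤ n → r.res (r.hist w n) (w n) ∉ A.sig

/-- `A` is history-deterministic (as a Büchi automaton). -/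
def HistoryDeterministic (A : BuchiAutomaton σ Q) : Prop :=
  ∃ r : Resolver A, ∀ w ∈ A.Lang, r.InducedBuchiAcc w

/-- `A` is history-deterministic (as a coBüchi automaton). -/
def CoHistoryDeterministic (A : BuchiAutomaton σ Q) : Prop :=
  ∃ r : Resolver A, ∀ w ∈ A.CoLang, r.InducedCoBuchiAcc w

end BuchiAutomaton

/-- The finite factor `w[m..n)` of the infinite word `w`, as a list. -/
def wordSegment {σ : Type} (w : ℕ → σ) (m n : ℕ) : List σ :=
  (List.range (n - m)).map fun i => w (m + i)

/-- `omegaPow X`: the infinite words that can be written as an infinite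
concatenation of finite words, each belonging to `X`. -/
def omegaPow {σ : Type} (X : Set (List σ)) : Set (ℕ → σ) :=
  {w | ∃ φ : ℕ → ℕ, φ 0 = 0 ∧ StrictMono φ ∧ ∀ k, wordSegment w (φ k) (φ (k + 1)) ∈ X}

/-- The alphabet `Σ = {a, b, c, 1, …, 6, r₁, …, r₆, y}` (with `num i` the digit
`i+1` and `res i` the reset letter `r_{i+1}`). -/
inductive Al : Type
  | a | b | c
  | num (i : Fin 6)
  | res (i : Fin 6)
  | y
deriving DecidableEq, Fintype

/-- The states of the classifier DFA. -/
inductive CSt : Type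
  | p | q | t | s | r
  | ell (i : Fin 6)
deriving DecidableEq, Fintype

/-- The (partial) transition function of the classifier. A digit `num i` belongs
to `E = {1,2,3}` iff `i.val < 3`, and to `F = {4,5,6}` otherwise. -/
def clStep : CSt → Al → Option CSt
  | .p, .b => some .p
  | .p, .num _ => some .p
  | .p, .y => some .p
  | .p, .a => some .q
  | .p, .c => some .t
  | .q, .a => some .q
  | .q, .num _ => some .p
  | .q, .y => some .p
  | .q, .b => some .r
  | .q, .c => some .s
  | .t, .c => some .t
  | .t, .b => some .p
  | .t, .a => some .q
  | .t, .num i => if i.val < 3 then some (.ell i) else some .p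
  | .t, .y => some .p
  | .s, .c => some .s
  | .s, .b => some .r
  | .s, .a => some .q
  | .s, .num i => if i.val < 3 then some (.ell i) else some .p
  | .s, .y => some .p
  | .r, .b => some .r
  | .r, .a => some .q
  | .r, .c => some .s
  | .r, .num i => if 3 ≤ i.val then some (.ell i) else some .p
  | .r, .y => some .p
  | _, _ => none

/-- The run of the classifier on a finite word, from a given state. -/
def clRun : CSt → List Al → Option CSt
  | c, [] => some c
  | c, l :: w =>
    match clStep c l with
    | some c' => clRun c' w
    | none => none

/-- The language `L_α` (for `α : Fin 6`, representing `L_{α+1}`): the finite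
words whose run in the classifier from `p` is defined and ends in `ℓ_α`. -/
def Lcl (α : Fin 6) : Set (List Al) :=
  {w | clRun .p w = some (.ell α)}

/-- `L_main = (Σ^* ⋃_{α≠β} (L_α ∪ {r_α}) L_β L_β Σ^* y)^ω`. -/
def LMain : Set (ℕ → Al) :=
  omegaPow {w | ∃ α β : Fin 6, α ≠ β ∧ ∃ u v₁ v₂ v₃ z : List Al,
    (v₁ ∈ Lcl α ∨ v₁ = [Al.res α]) ∧ v₂ ∈ Lcl β ∧ v₃ ∈ Lcl β ∧
    w = u ++ v₁ ++ v₂ ++ v₃ ++ z ++ [Al.y]}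

/-!
`LMain` is prefix independent, so after completing an automaton for its complement and dropping the
unreachable states, every state of the resulting Büchi automaton `M` recognizes `LMain`. Hence
whether a loop of `M` contains a significant transition depends on its word `u` only: it does iff
`y` occurs in `u` and some power of `u` contains a pattern, i.e. an infix in
`(L_α ∪ {r_α}) L_β L_β` with `α ≠ β`.

The *core* is the partial automaton with 60 states that remembers the last label, whether repeating
it would complete a pattern, and the state of the classifier; it blocks exactly when a pattern is
completed. In a bottom component of the product of `M` with the core, the state of `M` determines
the state of the core, so even a part `B` of it that is strongly connected by `y`-free words
contains 60 states of `M`.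

After a pattern has been read from `B` without `y`, `M` cannot be led back into `B` without `y`,
since a `y`-free loop is free of significant transitions. For every label `β`, some such state
outside `B` still remembers `β`. If these six states are distinct, we are done. If two of them
coincide, that state does not know the last label, so until the next label is read `M` follows the
classifier outside `B`: this takes five states, and a sixth is found on a `y`-free loop containing a
pattern.
-/

open Filter

section Runs

variable {σ D V : Type*}

lemma foldlM_append_of_eq_some {f : D → σ → Option D} {d e : D} {u : List σ}
    (hu : u.foldlM f d = some e) (v : List σ) : (u ++ v).foldlM f d = v.foldlM f e := by
  simp [hu]

lemma foldlM_append_of_eq_none {f : D → σ → Option D} {d : D} {u : List σ}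
    (hu : u.foldlM f d = none) (v : List σ) : (u ++ v).foldlM f d = none := by
  simp [hu]

lemma foldlM_append_eq_some_iff {f : D → σ → Option D} {d e : D} {u v : List σ} :
    (u ++ v).foldlM f d = some e ↔ ∃ c, u.foldlM f d = some c ∧ v.foldlM f c = some e := by
  rw [List.foldlM_append]
  exact Option.bind_eq_some_iff

lemma foldlM_flatten_replicate_of_eq_some {f : D → σ → Option D} {d : D} {u : List σ}
    (hu : u.foldlM f d = some d) (k : ℕ) : (List.replicate k u).flatten.foldlM f d = some d := by
  induction k with
  | zero => rfl
  | succ k ih => rwa [List.replicate_succ, List.flatten_cons, foldlM_append_of_eq_some hu]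

lemma foldl_flatten_replicate (step : V → σ → V) (u : List σ) (k : ℕ) (s : V) :
    (List.replicate k u).flatten.foldl step s = (fun t => u.foldl step t)^[k] s := by
  induction k generalizing s with
  | zero => rfl
  | succ k ih => rw [List.replicate_succ, List.flatten_cons, List.foldl_append, ih,
      Function.iterate_succ_apply]

lemma exists_bottom [Finite V] {R : V → V → Prop} (hrefl : ∀ v, R v v)
    (htrans : ∀ {u v w}, R u v → R v w → R u w) (v : V) : ∃ b, R v b ∧ ∀ c, R b c → R c b := by
  let _ : Preorder V := { le := R, le_refl := hrefl, le_trans := fun _ _ _ => htrans }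
  obtain ⟨b, hvb, hb⟩ := Finite.exists_le_maximal (p := fun _ : V => True) (a := v) trivial
  exact ⟨b, hvb, fun c hc => hb.2 trivial hc⟩

lemma exists_flatten_replicate_loop [Finite V] [Nonempty V] (step : V → σ → V) (u : List σ) :
    ∃ s k, (List.replicate (k + 1) u).flatten.foldl step s = s := by
  simp only [foldl_flatten_replicate, Function.iterate_succ_apply]
  set g : V → V := fun t => u.foldl step t
  obtain ⟨b, -, hb⟩ := exists_bottom (R := fun s t => ∃ k, g^[k] s = t) (fun _ => ⟨0, rfl⟩)
    (by rintro s _ _ ⟨m, rfl⟩ ⟨n, rfl⟩; exact ⟨n + m, Function.iterate_add_apply g n m s⟩)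
    (Classical.arbitrary V)
  exact ⟨b, hb (g b) ⟨1, rfl⟩⟩

lemma card_le_ncard_of_injective [Finite V] {I : Type*} {S : Set V} {g : I → V}
    (hg : Function.Injective g) (hgS : ∀ i, g i ∈ S) : Nat.card I ≤ S.ncard :=
  Nat.card_le_card_of_injective (Set.codRestrict g S hgS) (hg.codRestrict hgS)

end Runs

section Components

variable {σ Q D : Type*} {step : Q → σ → Q} {f : D → σ → Option D} {N : List σ}

/-- Reachability in the product of a total automaton `step` and a partial automaton `f`, by words
avoiding the letters of `N`. -/
def Reach (step : Q → σ → Q) (f : D → σ → Option D) (N : List σ) (x x' : Q × D) : Prop :=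
  ∃ u : List σ, u.Disjoint N ∧ u.foldl step x.1 = x'.1 ∧ u.foldlM f x.2 = some x'.2

namespace Reach

lemma refl (x : Q × D) : Reach step f N x x :=
  ⟨[], by simp, rfl, rfl⟩

lemma trans {x x' x'' : Q × D} (h : Reach step f N x x') (h' : Reach step f N x' x'') :
    Reach step f N x x'' := by
  obtain ⟨u, huN, hu, hu'⟩ := h
  obtain ⟨v, hvN, hv, hv'⟩ := h'
  refine ⟨u ++ v, List.disjoint_append_left.2 ⟨huN, hvN⟩, ?_, ?_⟩
  · rw [List.foldl_append, hu, hv]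
  · rw [foldlM_append_of_eq_some hu', hv']

lemma forget_avoiding {x x' : Q × D} (h : Reach step f N x x') : Reach step f [] x x' := by
  obtain ⟨u, -, hu⟩ := h
  exact ⟨u, by simp, hu⟩

lemma of_foldlM_eq_some {s : Q} {d d' : D} {u : List σ} (hN : u.Disjoint N)
    (hd : u.foldlM f d = some d') : Reach step f N (s, d) (u.foldl step s, d') :=
  ⟨u, hN, rfl, hd⟩

end Reach

/-- A bottom strongly connected component of the product of `step` and `f`, with respect to words
avoiding the letters of `N`. -/
structure IsBottomComponent (step : Q → σ → Q) (f : D → σ → Option D) (N : List σ)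
    (B : Set (Q × D)) : Prop where
  nonempty : B.Nonempty
  closed : ∀ {x x'}, x ∈ B → Reach step f N x x' → x' ∈ B
  connected : ∀ {x x'}, x ∈ B → x' ∈ B → Reach step f N x x'

lemma exists_isBottomComponent [Finite Q] [Finite D] (step : Q → σ → Q) (f : D → σ → Option D)
    (N : List σ) (x : Q × D) :
    ∃ B, IsBottomComponent step f N B ∧ ∀ x' ∈ B, Reach step f N x x' := by
  obtain ⟨b, hxb, hb⟩ := exists_bottom (R := Reach step f N) Reach.refl Reach.trans x
  exact ⟨{x' | Reach step f N b x'}, ⟨⟨b, Reach.refl b⟩, fun h h' => h.trans h',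
    fun h h' => (hb _ h).trans h'⟩, fun _ h => hxb.trans h⟩

namespace IsBottomComponent

variable {B : Set (Q × D)}

lemma foldl_mem (hB : IsBottomComponent step f N B) {s : Q} {d d' : D} {u : List σ}
    (hs : (s, d) ∈ B) (hN : u.Disjoint N) (hd : u.foldlM f d = some d') :
    (u.foldl step s, d') ∈ B :=
  hB.closed hs (.of_foldlM_eq_some hN hd)

lemma exists_mem (hB : IsBottomComponent step f N B) {d' : D}
    (hf : ∀ d, ∃ u : List σ, u.Disjoint N ∧ u.foldlM f d = some d') : ∃ s, (s, d') ∈ B := by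
  obtain ⟨⟨s, d⟩, hs⟩ := hB.nonempty
  obtain ⟨u, hN, hd⟩ := hf d
  exact ⟨_, hB.foldl_mem hs hN hd⟩

lemma exists_return (hB : IsBottomComponent step f N B) {s : Q} {d d' : D} {u : List σ}
    (hs : (s, d) ∈ B) (hN : u.Disjoint N) (hd : u.foldlM f d = some d') :
    ∃ v : List σ, v.Disjoint N ∧ (u ++ v).foldl step s = s ∧ v.foldlM f d' = some d := by
  obtain ⟨v, hvN, hv, hvd⟩ := hB.connected (hB.foldl_mem hs hN hd) hs
  exact ⟨v, hvN, by rwa [List.foldl_append], hvd⟩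

end IsBottomComponent

end Components

/-! ### Infinite words

Infinite words are `Stream'`s, which unfold to functions on `ℕ`. -/

section InfiniteWords

variable {σ : Type}

open Stream'

lemma flatten_replicate_append_cycle {u : List σ} (hu : u ≠ []) (k : ℕ) :
    (List.replicate k u).flatten ++ₛ cycle u hu = cycle u hu := by
  induction k with
  | zero => rfl
  | succ k ih =>
    rw [List.replicate_succ, List.flatten_cons, append_append_stream, ih, ← cycle_eq]

lemma le_length_flatten_replicate {u : List σ} (hu : u ≠ []) (n : ℕ) :
    n ≤ (List.replicate n u).flatten.length := by
  simpa using Nat.le_mul_of_pos_right n (List.length_pos_iff.2 hu)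

lemma take_cycle {u : List σ} (hu : u ≠ []) {n k : ℕ}
    (hn : n ≤ (List.replicate k u).flatten.length) :
    (cycle u hu).take n = (List.replicate k u).flatten.take n := by
  rw [← flatten_replicate_append_cycle hu k, take_append_of_le_length _ _ _ hn]

lemma wordSegment_eq_take_drop (w : Stream' σ) (m n : ℕ) :
    wordSegment w m n = (w.drop m).take (n - m) :=
  List.ext_getElem (by simp [wordSegment]) fun i _ _ => by
    simp only [wordSegment, List.getElem_map, List.getElem_range, take_get, get_drop]
    rfl

section LeftClosed

variable {X : Set (List σ)}

lemma exists_take_drop_mem_of_le (hX : ∀ u, ∀ v ∈ X, u ++ v ∈ X) {w : Stream' σ} {m n k : ℕ}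
    (hmn : m ≤ n) (hk : (w.drop n).take k ∈ X) : ∃ k, (w.drop m).take k ∈ X := by
  obtain ⟨j, rfl⟩ := Nat.exists_eq_add_of_le hmn
  refine ⟨j + k, ?_⟩
  rw [take_add, drop_drop]
  exact hX _ _ hk

lemma mem_omegaPow_iff (hnil : [] ∉ X) (hX : ∀ u, ∀ v ∈ X, u ++ v ∈ X) {w : Stream' σ} :
    w ∈ omegaPow X ↔ ∀ n, ∃ k, (w.drop n).take k ∈ X := by
  constructor
  · rintro ⟨φ, -, hφ, hmem⟩ n
    have hn := hmem n
    rw [wordSegment_eq_take_drop] at hn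
    exact exists_take_drop_mem_of_le hX hφ.le_apply hn
  · intro h
    choose k hk using h
    have hpos : ∀ n, 0 < k n := fun n => Nat.pos_of_ne_zero fun h₀ => hnil <| by
      simpa [h₀] using hk n
    refine ⟨fun i => (fun n => n + k n)^[i] 0, rfl, strictMono_nat_of_lt_succ fun i => ?_,
      fun i => ?_⟩ <;> simp only [Function.iterate_succ_apply']
    · exact Nat.lt_add_of_pos_right (hpos _)
    · rw [wordSegment_eq_take_drop, Nat.add_sub_cancel_left]
      exact hk _

lemma append_mem_omegaPow_iff (hnil : [] ∉ X) (hX : ∀ u, ∀ v ∈ X, u ++ v ∈ X) (u : List σ)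
    (w : Stream' σ) : u ++ₛ w ∈ omegaPow X ↔ w ∈ omegaPow X := by
  have hdrop : ∀ n, (u ++ₛ w).drop (u.length + n) = w.drop n := fun n => by
    rw [← drop_drop, drop_append_stream]
  rw [mem_omegaPow_iff hnil hX, mem_omegaPow_iff hnil hX]
  refine ⟨fun h n => hdrop n ▸ h (u.length + n), fun h n => ?_⟩
  obtain ⟨k, hk⟩ := h n
  exact exists_take_drop_mem_of_le hX (Nat.le_add_left n u.length) (hdrop n ▸ hk)

lemma cycle_mem_omegaPow_iff (hnil : [] ∉ X) (hX : ∀ u, ∀ v ∈ X, u ++ v ∈ X) {u : List σ}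
    (hu : u ≠ []) :
    cycle u hu ∈ omegaPow X ↔ ∃ k, ∃ v ∈ X, v <+: (List.replicate k u).flatten := by
  rw [mem_omegaPow_iff hnil hX]
  constructor
  · intro h
    obtain ⟨n, hn⟩ := h 0
    rw [drop_zero, take_cycle hu (le_length_flatten_replicate hu n)] at hn
    exact ⟨n, _, hn, List.take_prefix _ _⟩
  · rintro ⟨k, v, hv, hvk⟩ n
    refine exists_take_drop_mem_of_le hX (le_length_flatten_replicate hu n) (k := v.length) ?_
    rwa [← flatten_replicate_append_cycle hu n, drop_append_stream, take_cycle hu hvk.length_le,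
      ← List.prefix_iff_eq_take.1 hvk]

end LeftClosed

section InfixClosed

variable {P : Set (List σ)} {y : σ}

lemma append_mem_image_append (hP : ∀ {u v}, u ∈ P → u <:+: v → v ∈ P) :
    ∀ u, ∀ v ∈ (· ++ [y]) '' P, u ++ v ∈ (· ++ [y]) '' P := by
  rintro u _ ⟨v, hv, rfl⟩
  exact ⟨u ++ v, hP hv (List.suffix_append u v).isInfix, List.append_assoc u v [y]⟩

lemma append_mem_omegaPow_image_append_iff (hP : ∀ {u v}, u ∈ P → u <:+: v → v ∈ P) (u : List σ)
    (w : Stream' σ) :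
    u ++ₛ w ∈ omegaPow ((· ++ [y]) '' P) ↔ w ∈ omegaPow ((· ++ [y]) '' P) :=
  append_mem_omegaPow_iff (by simp) (append_mem_image_append hP) u w

lemma cycle_mem_omegaPow_image_append_iff (hP : ∀ {u v}, u ∈ P → u <:+: v → v ∈ P) {u : List σ}
    (hu : u ≠ []) :
    cycle u hu ∈ omegaPow ((· ++ [y]) '' P) ↔
      (∃ k, (List.replicate k u).flatten ∈ P) ∧ y ∈ u := by
  rw [cycle_mem_omegaPow_iff (by simp) (append_mem_image_append hP)]
  constructor
  · rintro ⟨k, _, ⟨v, hv, rfl⟩, hvk⟩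
    refine ⟨⟨k, hP hv ((List.prefix_append v [y]).trans hvk).isInfix⟩, ?_⟩
    have hy : y ∈ (List.replicate k u).flatten := hvk.subset (by simp)
    obtain ⟨t, ht, hyt⟩ := List.mem_flatten.1 hy
    rwa [List.eq_of_mem_replicate ht] at hyt
  · rintro ⟨⟨k, hk⟩, hy⟩
    obtain ⟨u₁, u₂, hu₁₂⟩ := List.append_of_mem hy
    refine ⟨k + 1, _, ⟨_, hP hk (List.prefix_append _ u₁).isInfix, rfl⟩, u₂, ?_⟩
    simp [List.replicate_succ', ← hu₁₂]

end InfixClosed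

end InfiniteWords

/-! ### Complete deterministic Büchi automata -/

/-- Complete deterministic Büchi automata without an initial state; `sig` marks the significant
transitions. -/
structure DetBuchi (σ Q : Type*) where
  step : Q → σ → Q
  sig : Q → σ → Prop

namespace DetBuchi

section Safety

variable {σ Q : Type*} (M : DetBuchi σ Q)

/-- Reading the finite word from `s` uses no significant transition. -/
def Safe : Q → List σ → Prop
  | _, [] => True
  | s, l :: u => ¬M.sig s l ∧ Safe (M.step s l) u

/-- A loop of `M` at `s` that uses no significant transition. -/
def SafeLoop (s : Q) (u : List σ) : Prop :=
  u.foldl M.step s = s ∧ M.Safe s u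

variable {M} {s : Q} {u v : List σ}

lemma safe_append : M.Safe s (u ++ v) ↔ M.Safe s u ∧ M.Safe (u.foldl M.step s) v := by
  induction u generalizing s with
  | nil => simp only [Safe, List.nil_append, List.foldl_nil, true_and]
  | cons l u ih => simp only [List.cons_append, Safe, ih, and_assoc, List.foldl_cons]

lemma Safe.of_prefix (hv : M.Safe s v) (h : u <+: v) : M.Safe s u := by
  obtain ⟨t, rfl⟩ := h
  exact (safe_append.1 hv).1

lemma SafeLoop.append (hu : M.SafeLoop s u) (hv : M.SafeLoop s v) : M.SafeLoop s (u ++ v) := by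
  refine ⟨by rw [List.foldl_append, hu.1, hv.1], safe_append.2 ⟨hu.2, ?_⟩⟩
  rw [hu.1]
  exact hv.2

lemma SafeLoop.flatten_replicate (hu : M.SafeLoop s u) (k : ℕ) :
    M.SafeLoop s (List.replicate k u).flatten := by
  induction k with
  | zero => exact ⟨rfl, trivial⟩
  | succ k ih => exact hu.append ih

end Safety

section Language

open Stream'

variable {σ Q : Type} (M : DetBuchi σ Q)

/-- The state reached from `s` after reading the first `n` letters of `w`. -/
def stateAt (s : Q) (w : Stream' σ) (n : ℕ) : Q :=
  (w.take n).foldl M.step s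

/-- The infinite words whose run from `s` satisfies the Büchi condition. -/
def Lang (s : Q) : Set (Stream' σ) :=
  {w | ∃ᶠ n in atTop, M.sig (M.stateAt s w n) (w.get n)}

/-- Every state of `M` accepts exactly the words of `L`. -/
def Recognizes (L : Set (Stream' σ)) : Prop :=
  ∀ s, M.Lang s = L

variable {M} {s : Q} {u : List σ} {w : Stream' σ}

lemma stateAt_succ (n : ℕ) : M.stateAt s w (n + 1) = M.step (M.stateAt s w n) (w.get n) := by
  rw [stateAt, take_succ', List.foldl_append]
  rfl

lemma stateAt_append (n : ℕ) :
    M.stateAt s (u ++ₛ w) (u.length + n) = M.stateAt (u.foldl M.step s) w n := by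
  rw [stateAt, ← append_take, List.foldl_append, stateAt]

lemma safe_take_iff {n : ℕ} :
    M.Safe s (w.take n) ↔ ∀ i < n, ¬M.sig (M.stateAt s w i) (w.get i) := by
  induction n with
  | zero => simp [Safe]
  | succ n ih =>
    rw [take_succ', safe_append, ih, Nat.forall_lt_succ_right]
    simp only [Safe, and_true]
    rfl

lemma notMem_lang_iff :
    w ∉ M.Lang s ↔ ∃ N, ∀ n, N ≤ n → ¬M.sig (M.stateAt s w n) (w.get n) :=
  not_frequently.trans eventually_atTop

lemma append_mem_lang_iff : u ++ₛ w ∈ M.Lang s ↔ w ∈ M.Lang (u.foldl M.step s) := by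
  rw [Lang, Set.mem_ofPred_eq, ← map_add_atTop_eq_nat u.length, frequently_map]
  simp only [Nat.add_comm _ u.length, stateAt_append, get_append_right]
  rfl

lemma cycle_mem_lang_iff (hu : u ≠ []) (hloop : u.foldl M.step s = s) :
    cycle u hu ∈ M.Lang s ↔ ¬M.Safe s u := by
  constructor
  · intro h hsafe
    obtain ⟨n, hn⟩ := h.exists
    refine safe_take_iff.1 ?_ n n.lt_succ_self hn
    rw [take_cycle hu (le_length_flatten_replicate hu _)]
    exact (SafeLoop.flatten_replicate ⟨hloop, hsafe⟩ (n + 1)).2.of_prefix (List.take_prefix _ _)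
  · intro h
    have hu_take : (cycle u hu).take u.length = u := by
      simpa using take_cycle hu (n := u.length) (k := 1) (by simp)
    rw [← hu_take, safe_take_iff] at h
    push Not at h
    obtain ⟨i, -, hi⟩ := h
    refine frequently_atTop.2 fun n => ⟨(List.replicate n u).flatten.length + i,
      (le_length_flatten_replicate hu n).trans (Nat.le_add_right _ _), ?_⟩
    rwa [← flatten_replicate_append_cycle hu n, stateAt_append, get_append_right,
      foldl_flatten_replicate, Function.iterate_fixed hloop]

/-- The states of `M` that are reachable from `s`. -/
def reachableStates (M : DetBuchi σ Q) (s : Q) : Set Q :=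
  {t | ∃ u : List σ, u.foldl M.step s = t}

/-- The part of `M` that is reachable from `s`. -/
def reachable (M : DetBuchi σ Q) (s : Q) : DetBuchi σ (M.reachableStates s) where
  step t l := ⟨M.step t l, by
    obtain ⟨_, u, rfl⟩ := t
    exact ⟨u ++ [l], List.foldl_append⟩⟩
  sig t l := M.sig t l

lemma coe_stateAt_reachable (t : M.reachableStates s) (n : ℕ) :
    ((M.reachable s).stateAt t w n : Q) = M.stateAt t w n := by
  induction n with
  | zero => rfl
  | succ n ih => rw [stateAt_succ, stateAt_succ, ← ih]; rfl

lemma recognizes_reachable (h : ∀ u (w : Stream' σ), u ++ₛ w ∈ M.Lang s ↔ w ∈ M.Lang s) :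
    (M.reachable s).Recognizes (M.Lang s) := by
  rintro ⟨t, u, hu⟩
  ext w
  rw [← h u, append_mem_lang_iff, hu]
  exact frequently_congr (.of_forall fun n =>
    iff_of_eq (congrArg (M.sig · (w.get n)) (coe_stateAt_reachable _ n)))

end Language

end DetBuchi

namespace BuchiAutomaton

open Stream'

variable {σ Q : Type} (A : BuchiAutomaton σ Q)

open Classical in
/-- The successor of `s` on the letter `l`, which is `s` itself if there is no transition. -/
noncomputable def next (s : Q) (l : σ) : Q :=
  if h : ∃ t, (s, l, t) ∈ A.trans then h.choose else s

/-- The complete deterministic automaton obtained from a deterministic `A` by adding self-loops. -/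
noncomputable def completion : DetBuchi σ Q where
  step := A.next
  sig s l := (s, l, A.next s l) ∈ A.sig

variable {A}

lemma next_eq (hdet : A.Deterministic) {s t : Q} {l : σ} (h : (s, l, t) ∈ A.trans) :
    A.next s l = t := by
  have hex : ∃ t, (s, l, t) ∈ A.trans := ⟨t, h⟩
  rw [next, dif_pos hex]
  exact hdet _ _ _ _ hex.choose_spec h

lemma IsRunFrom.eq_stateAt (hdet : A.Deterministic) {s : Q} {w : Stream' σ} {ρ : ℕ → Q}
    (hρ : A.IsRunFrom s w ρ) : ρ = A.completion.stateAt s w := by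
  funext n
  induction n with
  | zero => exact hρ.1
  | succ n ih =>
    rw [DetBuchi.stateAt_succ, ← ih]
    exact (next_eq hdet (hρ.2 n)).symm

lemma isRunFrom_stateAt (hdet : A.Deterministic) (hext : ∀ u : List σ, ∃ w, u ++ₛ w ∈ A.CoLang)
    (w : Stream' σ) : A.IsRunFrom A.init w (A.completion.stateAt A.init w) := by
  refine ⟨rfl, fun n => ?_⟩
  obtain ⟨w', ρ, hρ, -⟩ := hext (w.take (n + 1))
  have hn : n < (w.take (n + 1)).length := by simp
  have htrans := hρ.2 n
  have hletter : (w.take (n + 1) ++ₛ w') n = w n := by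
    change (w.take (n + 1) ++ₛ w').get n = w.get n
    rw [get_append_left _ _ _ hn, take_get]
  have hprefix {m : ℕ} (hm : m ≤ n + 1) : ρ m = A.completion.stateAt A.init w m := by
    rw [hρ.eq_stateAt hdet, DetBuchi.stateAt, take_append_of_le_length _ _ _ (by simpa), take_take,
      min_eq_right hm, DetBuchi.stateAt]
  rwa [hletter, hprefix n.le_succ, hprefix le_rfl] at htrans

lemma lang_completion (hdet : A.Deterministic) (hext : ∀ u : List σ, ∃ w, u ++ₛ w ∈ A.CoLang) :
    A.completion.Lang A.init = A.CoLangᶜ := by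
  refine eq_compl_comm.2 (Set.ext fun w : Stream' σ => ?_)
  have hacc : A.CoBuchiAcc w (A.completion.stateAt A.init w) ↔ w ∉ A.completion.Lang A.init := by
    rw [DetBuchi.notMem_lang_iff]
    simp only [CoBuchiAcc, DetBuchi.stateAt_succ]
    rfl
  refine Iff.trans ⟨?_, fun h => ⟨_, isRunFrom_stateAt hdet hext w, h⟩⟩ hacc
  rintro ⟨ρ, hρ, h⟩
  rwa [hρ.eq_stateAt hdet] at h

end BuchiAutomaton

/-! ### Patterns and the core -/

section Pattern

open Stream'

/-- The words allowed at the beginning of a pattern, where they announce the label `α`. -/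
def IsOpening (α : Fin 6) (v : List Al) : Prop :=
  v ∈ Lcl α ∨ v = [.res α]

/-- `w` has an infix in `(L_α ∪ {r_α}) L_β L_β` for some `α ≠ β`. -/
def HasPattern (w : List Al) : Prop :=
  ∃ α β, α ≠ β ∧ ∃ v₁ v₂ v₃, IsOpening α v₁ ∧ v₂ ∈ Lcl β ∧ v₃ ∈ Lcl β ∧ v₁ ++ v₂ ++ v₃ <:+: w

lemma HasPattern.of_infix {v w : List Al} (hv : HasPattern v) (h : v <:+: w) : HasPattern w := by
  obtain ⟨α, β, hne, v₁, v₂, v₃, h₁, h₂, h₃, hi⟩ := hv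
  exact ⟨α, β, hne, v₁, v₂, v₃, h₁, h₂, h₃, hi.trans h⟩

lemma LMain_eq_omegaPow_image :
    LMain = omegaPow ((· ++ [Al.y]) '' {w | HasPattern w}) := by
  refine congrArg omegaPow (Set.ext fun w => ⟨?_, ?_⟩)
  · rintro ⟨α, β, hne, u, v₁, v₂, v₃, z, h₁, h₂, h₃, rfl⟩
    exact ⟨_, ⟨α, β, hne, v₁, v₂, v₃, h₁, h₂, h₃, u, z, by simp⟩, rfl⟩
  · rintro ⟨_, ⟨α, β, hne, v₁, v₂, v₃, h₁, h₂, h₃, u, z, rfl⟩, rfl⟩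
    exact ⟨α, β, hne, u, v₁, v₂, v₃, z, h₁, h₂, h₃, by simp⟩

lemma append_mem_LMain_iff (u : List Al) (w : Stream' Al) : u ++ₛ w ∈ LMain ↔ w ∈ LMain := by
  rw [LMain_eq_omegaPow_image]
  exact append_mem_omegaPow_image_append_iff HasPattern.of_infix u w

lemma cycle_mem_LMain_iff {u : List Al} (hu : u ≠ []) :
    cycle u hu ∈ LMain ↔ (∃ k, HasPattern (List.replicate k u).flatten) ∧ .y ∈ u := by
  rw [LMain_eq_omegaPow_image]
  exact cycle_mem_omegaPow_image_append_iff HasPattern.of_infix hu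

lemma exists_append_notMem_LMain (u : List Al) : ∃ w, u ++ₛ w ∉ LMain :=
  ⟨cycle [.b] (by simp), by rw [append_mem_LMain_iff, cycle_mem_LMain_iff]; simp⟩

end Pattern

section Classifier

/-- The states of the classifier that are not leaves. -/
inductive InnerSt : Type
  | p | q | t | s | r
deriving DecidableEq

instance : Fintype InnerSt := ⟨{.p, .q, .t, .s, .r}, fun i => by cases i <;> decide⟩

/-- The inclusion of the inner states into the classifier. -/
def InnerSt.toCSt : InnerSt → CSt
  | .p => .p | .q => .q | .t => .t | .s => .s | .r => .r

/-- The partial inverse of `InnerSt.toCSt`. -/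
def CSt.toInnerSt? : CSt → Option InnerSt
  | .p => some .p | .q => some .q | .t => some .t | .s => some .s | .r => some .r
  | .ell _ => none

/-- The classifier, blocked when it would enter a leaf. -/
def innerStep (i : InnerSt) (l : Al) : Option InnerSt :=
  (clStep i.toCSt l).bind CSt.toInnerSt?

lemma innerStep_eq_some_iff :
    ∀ {i j : InnerSt} {l : Al}, innerStep i l = some j ↔ clStep i.toCSt l = some j.toCSt := by
  decide +kernel

lemma exists_res_or_innerStep_or_ell : ∀ (i : InnerSt) (l : Al), (∃ γ, l = .res γ) ∨
    (∃ j, innerStep i l = some j) ∨ ∃ γ, clStep i.toCSt l = some (.ell γ) := by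
  decide +kernel

lemma clRun_cons_of_clStep {c c' : CSt} {l : Al} (h : clStep c l = some c') (v : List Al) :
    clRun c (l :: v) = clRun c' v := by
  simp only [clRun, h]

lemma clRun_append_of_innerRun {i j : InnerSt} {u : List Al} (hu : u.foldlM innerStep i = some j)
    (v : List Al) : clRun i.toCSt (u ++ v) = clRun j.toCSt v := by
  induction u generalizing i with
  | nil => cases hu; rfl
  | cons l u ih =>
    rw [List.foldlM_cons] at hu
    obtain ⟨k, hk, hu⟩ := Option.bind_eq_some_iff.1 hu
    rw [List.cons_append, clRun_cons_of_clStep (innerStep_eq_some_iff.1 hk), ih hu]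

lemma eq_nil_of_clRun_ell {γ : Fin 6} {c : CSt} {v : List Al} (h : clRun (.ell γ) v = some c) :
    v = [] ∧ c = .ell γ := by
  cases v with
  | nil => exact ⟨rfl, (Option.some.inj h).symm⟩
  | cons l v => simp [clRun, clStep] at h

lemma exists_innerRun_of_clRun_eq_ell {i : InnerSt} {v : List Al} {γ : Fin 6}
    (h : clRun i.toCSt v = some (.ell γ)) : ∃ u l j, v = u ++ [l] ∧
      u.foldlM innerStep i = some j ∧ clStep j.toCSt l = some (.ell γ) := by
  induction v generalizing i with
  | nil => cases i <;> cases h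
  | cons l v ih =>
    rcases exists_res_or_innerStep_or_ell i l with ⟨γ, rfl⟩ | ⟨j, hj⟩ | ⟨δ, hδ⟩
    · cases i <;> cases h
    · rw [clRun_cons_of_clStep (innerStep_eq_some_iff.1 hj)] at h
      obtain ⟨u, l', k, rfl, hu, hk⟩ := ih h
      exact ⟨l :: u, l', k, rfl, by rwa [List.foldlM_cons, hj], hk⟩
    · rw [clRun_cons_of_clStep hδ] at h
      obtain ⟨rfl, hγ⟩ := eq_nil_of_clRun_ell h
      exact ⟨[], l, i, rfl, rfl, hγ ▸ hδ⟩

lemma append_mem_Lcl {i : InnerSt} {u v : List Al} {γ : Fin 6}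
    (hu : u.foldlM innerStep .p = some i) (hv : clRun i.toCSt v = some (.ell γ)) :
    u ++ v ∈ Lcl γ :=
  (clRun_append_of_innerRun hu v).trans hv

end Classifier

section Core

/-- The states of the core: the last label, whether repeating it would complete a pattern, and the
state of the classifier. -/
abbrev CoreSt : Type := Fin 6 × Bool × InnerSt

/-- The effect of a new label `γ` on the core; undefined if it completes a pattern. -/
def labelStep (α : Fin 6) (fresh : Bool) (γ : Fin 6) : Option CoreSt :=
  if γ = α then (if fresh then none else some (α, false, .p)) else some (γ, true, .p)

/-- The partial transition function of the core, blocked exactly when a pattern is completed. -/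
def coreStep : CoreSt → Al → Option CoreSt
  | _, .res γ => some (γ, false, .p)
  | (α, fresh, i), l =>
    match clStep i.toCSt l with
    | some (.ell γ) => labelStep α fresh γ
    | some c => c.toInnerSt?.map fun j => (α, fresh, j)
    | none => none

lemma eq_of_labelStep_eq_some {α γ : Fin 6} {fresh : Bool} {d : CoreSt}
    (h : labelStep α fresh γ = some d) : ∃ fresh', d = (γ, fresh', .p) := by
  unfold labelStep at h
  split_ifs at h with hγ
  · exact ⟨false, by rw [hγ, Option.some.inj h]⟩
  · exact ⟨true, (Option.some.inj h).symm⟩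

lemma coreStep_of_innerStep {i j : InnerSt} {l : Al} (h : innerStep i l = some j) (α : Fin 6)
    (fresh : Bool) : coreStep (α, fresh, i) l = some (α, fresh, j) := by
  have hc := innerStep_eq_some_iff.1 h
  cases l with
  | res γ => cases i <;> cases h
  | _ => simp only [coreStep, hc]; cases j <;> rfl

lemma coreStep_of_clStep_ell {i : InnerSt} {l : Al} {γ : Fin 6}
    (h : clStep i.toCSt l = some (.ell γ)) (α : Fin 6) (fresh : Bool) :
    coreStep (α, fresh, i) l = labelStep α fresh γ := by
  cases l with
  | res γ => cases i <;> cases h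
  | _ => simp only [coreStep, h]

lemma coreRun_of_innerRun {i j : InnerSt} {u : List Al} (h : u.foldlM innerStep i = some j)
    (α : Fin 6) (fresh : Bool) : u.foldlM coreStep (α, fresh, i) = some (α, fresh, j) := by
  induction u generalizing i with
  | nil => cases h; rfl
  | cons l u ih =>
    rw [List.foldlM_cons] at h ⊢
    obtain ⟨k, hk, hu⟩ := Option.bind_eq_some_iff.1 h
    rw [coreStep_of_innerStep hk]
    exact ih hu

lemma coreRun_of_clRun_ell {i : InnerSt} {v : List Al} {γ : Fin 6}
    (h : clRun i.toCSt v = some (.ell γ)) (α : Fin 6) (fresh : Bool) :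
    v.foldlM coreStep (α, fresh, i) = labelStep α fresh γ := by
  obtain ⟨u, l, j, rfl, hu, hl⟩ := exists_innerRun_of_clRun_eq_ell h
  rw [foldlM_append_of_eq_some (coreRun_of_innerRun hu α fresh), List.foldlM_cons,
    coreStep_of_clStep_ell hl]
  exact bind_pure _

/-- `c` may be the state of a run of the classifier that started later than the run now in `i`. -/
abbrev Lags (c i : InnerSt) : Prop :=
  c = i ∨ c = .p ∨ c = .t ∧ i = .s

lemma lags_of_coreStep : ∀ {c c' i : InnerSt} {l : Al}, Lags c i → innerStep c l = some c' →
    ∀ {α fresh}, ∀ d ∈ coreStep (α, fresh, i) l, Lags c' d.2.2 := by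
  decide +kernel

lemma clStep_ell_of_lags : ∀ {c i : InnerSt} {l : Al} {γ : Fin 6}, Lags c i →
    clStep c.toCSt l = some (.ell γ) → clStep i.toCSt l = some (.ell γ) := by
  decide +kernel

lemma lags_of_coreRun {c c' : InnerSt} {u : List Al} {d d' : CoreSt} (h : Lags c d.2.2)
    (hc : u.foldlM innerStep c = some c') (hd : u.foldlM coreStep d = some d') :
    Lags c' d'.2.2 := by
  induction u generalizing c d with
  | nil => cases hc; cases hd; exact h
  | cons l u ih =>
    rw [List.foldlM_cons] at hc hd
    obtain ⟨k, hk, hc⟩ := Option.bind_eq_some_iff.1 hc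
    obtain ⟨e, he, hd⟩ := Option.bind_eq_some_iff.1 hd
    exact ih (lags_of_coreStep h hk e he) hc hd

lemma eq_of_coreRun_of_isOpening {α : Fin 6} {v : List Al} (hv : IsOpening α v) {d d' : CoreSt}
    (hd : v.foldlM coreStep d = some d') : ∃ fresh, d' = (α, fresh, .p) := by
  rcases hv with hv | rfl
  · obtain ⟨u, l, j, rfl, hu, hl⟩ := exists_innerRun_of_clRun_eq_ell (i := .p) hv
    obtain ⟨e, he, hd⟩ := foldlM_append_eq_some_iff.1 hd
    have hlag : Lags j e.2.2 := lags_of_coreRun (.inr (.inl rfl)) hu he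
    rw [List.foldlM_cons, coreStep_of_clStep_ell (clStep_ell_of_lags hlag hl)] at hd
    exact eq_of_labelStep_eq_some ((bind_pure _).symm.trans hd)
  · exact ⟨false, (Option.some.inj hd).symm⟩

lemma coreRun_eq_none_of_hasPattern {w : List Al} (hw : HasPattern w) (d : CoreSt) :
    w.foldlM coreStep d = none := by
  obtain ⟨α, β, hne, v₁, v₂, v₃, h₁, h₂, h₃, u, z, rfl⟩ := hw
  refine Option.eq_none_iff_forall_ne_some.2 fun e he => ?_
  obtain ⟨d₃, hd₃, -⟩ := foldlM_append_eq_some_iff.1 he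
  obtain ⟨d₀, -, hd₃⟩ := foldlM_append_eq_some_iff.1 hd₃
  rw [List.append_assoc] at hd₃
  obtain ⟨d₁, hd₁, hd₃⟩ := foldlM_append_eq_some_iff.1 hd₃
  obtain ⟨fresh, rfl⟩ := eq_of_coreRun_of_isOpening h₁ hd₁
  have hd₂ : v₂.foldlM coreStep (α, fresh, .p) = some (β, true, .p) := by
    rw [coreRun_of_clRun_ell (i := .p) h₂, labelStep, if_neg hne.symm]
  rw [foldlM_append_of_eq_some hd₂, coreRun_of_clRun_ell (i := .p) h₃] at hd₃
  simp [labelStep] at hd₃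

/-- The core state `d` is justified by the history `h`. -/
def Tracks (h : List Al) (d : CoreSt) : Prop :=
  ∃ m k, IsOpening d.1 m ∧ k.foldlM innerStep .p = some d.2.2 ∧ m ++ k <:+ h ∧
    (d.2.1 → m ∈ Lcl d.1 ∧ ∃ γ ≠ d.1, ∃ m₁, IsOpening γ m₁ ∧ m₁ ++ m ++ k <:+ h)

namespace Tracks

variable {h : List Al} {l : Al} {α γ : Fin 6} {fresh : Bool} {i j : InnerSt} {d : CoreSt}

lemma of_res : Tracks (h ++ [.res γ]) (γ, false, .p) :=
  ⟨[.res γ], [], .inr rfl, rfl, ⟨h, by simp⟩, nofun⟩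

lemma of_innerStep (hh : Tracks h (α, fresh, i)) (hl : innerStep i l = some j) :
    Tracks (h ++ [l]) (α, fresh, j) := by
  obtain ⟨m, k, hm, hk, hs, hf⟩ := hh
  refine ⟨m, k ++ [l], hm, by rw [foldlM_append_of_eq_some hk, List.foldlM_cons, hl]; rfl, ?_,
    fun hfresh => ?_⟩
  · rwa [← List.append_assoc, List.suffix_append_self_iff]
  · obtain ⟨hmα, γ, hγ, m₁, hm₁, hs₁⟩ := hf hfresh
    refine ⟨hmα, γ, hγ, m₁, hm₁, ?_⟩
    rwa [← List.append_assoc, List.suffix_append_self_iff]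

lemma of_labelStep (hh : Tracks h (α, fresh, i)) (hl : clStep i.toCSt l = some (.ell γ))
    (hd : labelStep α fresh γ = some d) : Tracks (h ++ [l]) d := by
  obtain ⟨m, k, hm, hk, hs, -⟩ := hh
  have hkl : k ++ [l] ∈ Lcl γ := append_mem_Lcl hk (clRun_cons_of_clStep hl [])
  have hs' : m ++ (k ++ [l]) <:+ h ++ [l] := by
    rwa [← List.append_assoc, List.suffix_append_self_iff]
  unfold labelStep at hd
  split_ifs at hd with hα <;> cases hd
  · exact ⟨k ++ [l], [], .inl (hα ▸ hkl), rfl, by simpa using (List.suffix_append _ _).trans hs',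
      nofun⟩
  · exact ⟨k ++ [l], [], .inl hkl, rfl, by simpa using (List.suffix_append _ _).trans hs',
      fun _ => ⟨hkl, α, Ne.symm hα, m, hm, by simpa using hs'⟩⟩

lemma hasPattern_of_labelStep (hh : Tracks h (α, fresh, i))
    (hl : clStep i.toCSt l = some (.ell γ)) (hγ : labelStep α fresh γ = none) :
    HasPattern (h ++ [l]) := by
  obtain ⟨m, k, -, hk, -, hf⟩ := hh
  unfold labelStep at hγ
  split_ifs at hγ with hα hfresh
  obtain ⟨hm, δ, hδ, m₁, hm₁, hs⟩ := hf hfresh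
  have hkl : k ++ [l] ∈ Lcl α := append_mem_Lcl hk (clRun_cons_of_clStep (hα ▸ hl) [])
  refine ⟨δ, α, hδ, m₁, m, k ++ [l], hm₁, hm, hkl, List.IsSuffix.isInfix ?_⟩
  rwa [← List.append_assoc, List.suffix_append_self_iff]

lemma of_coreStep (hh : Tracks h d) {d' : CoreSt} (hd : coreStep d l = some d') :
    Tracks (h ++ [l]) d' := by
  obtain ⟨α, fresh, i⟩ := d
  rcases exists_res_or_innerStep_or_ell i l with ⟨γ, rfl⟩ | ⟨j, hj⟩ | ⟨γ, hγ⟩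
  · exact Option.some.inj hd ▸ of_res
  · exact Option.some.inj ((coreStep_of_innerStep hj α fresh).symm.trans hd) ▸ hh.of_innerStep hj
  · exact hh.of_labelStep hγ ((coreStep_of_clStep_ell hγ α fresh).symm.trans hd)

lemma hasPattern_of_coreStep (hh : Tracks h d) (hd : coreStep d l = none) :
    HasPattern (h ++ [l]) := by
  obtain ⟨α, fresh, i⟩ := d
  rcases exists_res_or_innerStep_or_ell i l with ⟨γ, rfl⟩ | ⟨j, hj⟩ | ⟨γ, hγ⟩
  · cases hd
  · cases (coreStep_of_innerStep hj α fresh).symm.trans hd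
  · exact hh.hasPattern_of_labelStep hγ ((coreStep_of_clStep_ell hγ α fresh).symm.trans hd)

lemma hasPattern_of_coreRun {v : List Al} (hh : Tracks h d) (hv : v.foldlM coreStep d = none) :
    HasPattern (h ++ v) := by
  induction v generalizing h d with
  | nil => cases hv
  | cons l v ih =>
    rw [← List.singleton_append, ← List.append_assoc]
    rw [List.foldlM_cons] at hv
    cases hd : coreStep d l with
    | none => exact (hh.hasPattern_of_coreStep hd).of_infix (List.prefix_append _ _).isInfix
    | some d' => exact ih (hh.of_coreStep hd) (by rwa [hd] at hv)

end Tracks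

lemma hasPattern_of_coreRun_eq_none {α : Fin 6} {v : List Al}
    (hv : v.foldlM coreStep (α, false, .p) = none) : HasPattern (.res α :: v) :=
  (Tracks.of_res (h := [])).hasPattern_of_coreRun hv

end Core

section Words

/-- A word of `L_α`. -/
def labelWord (α : Fin 6) : List Al :=
  if α.val < 3 then [.c, .num α] else [.a, .b, .num α]

/-- A word leading the classifier from `p` to the given state. -/
def innerWord : InnerSt → List Al
  | .p => [] | .q => [.a] | .t => [.c] | .s => [.a, .c] | .r => [.a, .b]

/-- A word leading the classifier from every inner state to `p`. -/
def syncWord : List Al := [.b, .num 0]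

/-- A word completing a pattern. -/
def patternWord : List Al := .res 1 :: (labelWord 0 ++ labelWord 0)

lemma labelWord_mem_Lcl : ∀ α, clRun .p (labelWord α) = some (.ell α) := by
  decide +kernel

lemma y_notMem_labelWord : ∀ α, .y ∉ labelWord α := by
  decide +kernel

lemma y_notMem_innerWord : ∀ i, .y ∉ innerWord i := by
  decide +kernel

lemma innerRun_innerWord : ∀ i, (innerWord i).foldlM innerStep .p = some i := by
  decide +kernel

lemma innerStep_y : ∀ i, innerStep i .y = some .p := by
  decide +kernel

lemma innerRun_y_cons (i : InnerSt) (u : List Al) :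
    (Al.y :: u).foldlM innerStep i = u.foldlM innerStep .p := by
  rw [List.foldlM_cons, innerStep_y]
  rfl

lemma innerRun_syncWord : ∀ i, syncWord.foldlM innerStep i = some .p := by
  decide +kernel

lemma hasPattern_patternWord : HasPattern patternWord :=
  ⟨1, 0, by decide, [.res 1], labelWord 0, labelWord 0, .inr rfl, labelWord_mem_Lcl 0,
    labelWord_mem_Lcl 0, List.infix_rfl⟩

lemma coreRun_y_cons (α : Fin 6) (fresh : Bool) (i : InnerSt) (u : List Al) :
    (Al.y :: u).foldlM coreStep (α, fresh, i) = u.foldlM coreStep (α, fresh, .p) := by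
  rw [List.foldlM_cons, coreStep_of_innerStep (innerStep_y i)]
  rfl

lemma coreRun_labelWord (α : Fin 6) (fresh : Bool) (γ : Fin 6) :
    (labelWord γ).foldlM coreStep (α, fresh, .p) = labelStep α fresh γ :=
  coreRun_of_clRun_ell (i := .p) (labelWord_mem_Lcl γ) α fresh

lemma coreRun_labelWord_twice (α : Fin 6) (fresh : Bool) (β : Fin 6) :
    (labelWord β ++ labelWord β).foldlM coreStep (α, fresh, .p) =
      if (α, fresh) = (β, false) then some (β, false, .p) else none := by
  revert α fresh β
  decide +kernel

lemma exists_coreRun (d d' : CoreSt) :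
    ∃ u : List Al, Al.y ∉ u ∧ u.foldlM coreStep d = some d' := by
  obtain ⟨α, fresh, i⟩ := d'
  suffices ∃ u : List Al, Al.y ∉ u ∧ u.foldlM coreStep d = some (α, fresh, .p) by
    obtain ⟨u, hy, hu⟩ := this
    refine ⟨u ++ innerWord i, by simp [hy, y_notMem_innerWord], ?_⟩
    rw [foldlM_append_of_eq_some hu, coreRun_of_innerRun (innerRun_innerWord i)]
  cases fresh with
  | false => exact ⟨[.res α], by simp, rfl⟩
  | true =>
    refine ⟨.res (α + 1) :: labelWord α, by simp [y_notMem_labelWord], ?_⟩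
    change (labelWord α).foldlM coreStep (α + 1, false, .p) = _
    rw [coreRun_labelWord, labelStep, if_neg (by simp)]

/-- For two labels at least (hence for one different from any given label), some word completes no
label from `i` and exactly that one from `j`. -/
def Separates (i j : InnerSt) : Prop :=
  ∀ α, ∃ γ ≠ α, ∃ v, v.foldlM innerStep i = some .p ∧ clRun j.toCSt v = some (.ell γ)

lemma separates_or_separates {i j : InnerSt} (hne : i ≠ j) : Separates i j ∨ Separates j i := by
  have key : ∀ i j : InnerSt, i ≠ j → ∃ k ∈ [(i, j), (j, i)], ∀ α, ∃ γ ≠ α,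
      ∃ v ∈ [[Al.num γ], [Al.b, Al.num γ]],
        v.foldlM innerStep k.1 = some .p ∧ clRun k.2.toCSt v = some (.ell γ) := by
    decide +kernel
  obtain ⟨k, hk, h⟩ := key i j hne
  have hsep : Separates k.1 k.2 := fun α => by
    obtain ⟨γ, hγ, v, -, hv⟩ := h α
    exact ⟨γ, hγ, v, hv⟩
  rcases List.mem_pair.1 hk with rfl | rfl
  · exact .inl hsep
  · exact .inr hsep

lemma Separates.exists_coreRun {i j : InnerSt} (h : Separates i j) (α : Fin 6) (fresh : Bool) :
    ∃ u : List Al, u.foldlM coreStep (α, fresh, i) ≠ none ∧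
      u.foldlM coreStep (α, fresh, j) = none := by
  obtain ⟨γ, hγ, v, hi, hj⟩ := h α
  have hstep : labelStep α fresh γ = some (γ, true, .p) := if_neg hγ
  refine ⟨v ++ labelWord γ, ?_, ?_⟩
  · rw [foldlM_append_of_eq_some (coreRun_of_innerRun hi α fresh), coreRun_labelWord, hstep]
    exact Option.some_ne_none _
  · rw [foldlM_append_of_eq_some ((coreRun_of_clRun_ell hj α fresh).trans hstep),
      coreRun_labelWord]
    simp [labelStep]

lemma label_eq_of_forall_coreRun_eq_none_iff {α α' : Fin 6} {fresh fresh' : Bool} {i i' : InnerSt}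
    (h : ∀ u : List Al, u.foldlM coreStep (α, fresh, i) = none ↔
      u.foldlM coreStep (α', fresh', i') = none) : (α, fresh) = (α', fresh') := by
  have htwice (β : Fin 6) : (α, fresh) = (β, false) ↔ (α', fresh') = (β, false) := by
    have := not_congr (h (.y :: (labelWord β ++ labelWord β)))
    rw [coreRun_y_cons, coreRun_y_cons, coreRun_labelWord_twice, coreRun_labelWord_twice] at this
    simpa using this
  have honce := h (.y :: labelWord α)
  simp only [coreRun_y_cons, coreRun_labelWord] at honce
  cases fresh with
  | false => exact ((htwice α).1 rfl).symm
  | true =>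
    cases fresh' with
    | false => exact (htwice α').2 rfl
    | true =>
      by_contra hne
      have hα : α ≠ α' := fun hα => hne (by rw [hα])
      simp [labelStep, hα] at honce

lemma coreSt_ext {d d' : CoreSt}
    (h : ∀ u : List Al, u.foldlM coreStep d = none ↔ u.foldlM coreStep d' = none) : d = d' := by
  obtain ⟨α, fresh, i⟩ := d
  obtain ⟨α', fresh', i'⟩ := d'
  cases label_eq_of_forall_coreRun_eq_none_iff h
  by_contra hne
  rcases separates_or_separates (fun hi : i = i' => hne (by rw [hi])) with hsep | hsep
  · obtain ⟨u, hu, hu'⟩ := hsep.exists_coreRun α fresh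
    exact hu ((h u).2 hu')
  · obtain ⟨u, hu, hu'⟩ := hsep.exists_coreRun α fresh
    exact hu ((h u).1 hu')

end Words

/-! ### Automata recognizing `LMain` -/

namespace DetBuchi

variable {Q : Type} {M : DetBuchi Al Q} {s : Q} {u : List Al}

section Loops

lemma Recognizes.safe_iff (hM : M.Recognizes LMain) (hs : u.foldl M.step s = s) :
    M.Safe s u ↔ (∀ k, ¬HasPattern (List.replicate k u).flatten) ∨ .y ∉ u := by
  rcases eq_or_ne u [] with rfl | hu
  · simp [Safe]
  · have hcycle := (cycle_mem_lang_iff hu hs).symm.trans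
      ((Set.ext_iff.1 (hM s) _).trans (cycle_mem_LMain_iff hu))
    rw [← not_exists, ← not_and_or, ← hcycle, not_not]

lemma Recognizes.not_hasPattern_of_safeLoop (hM : M.Recognizes LMain) (hu : M.SafeLoop s u)
    (hy : .y ∈ u) : ¬HasPattern u := by
  have hk := ((hM.safe_iff hu.1).1 hu.2).resolve_right (not_not_intro hy)
  simpa using hk 1

lemma Recognizes.safeLoop_of_y_notMem (hM : M.Recognizes LMain) (hs : u.foldl M.step s = s)
    (hy : .y ∉ u) : M.SafeLoop s u :=
  ⟨hs, (hM.safe_iff hs).2 (.inr hy)⟩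

lemma Recognizes.safeLoop_of_coreRun (hM : M.Recognizes LMain) (hs : u.foldl M.step s = s)
    {d : CoreSt} (hd : u.foldlM coreStep d = some d) : M.SafeLoop s u := by
  refine ⟨hs, (hM.safe_iff hs).2 (.inl fun k hk => ?_)⟩
  cases (coreRun_eq_none_of_hasPattern hk d).symm.trans (foldlM_flatten_replicate_of_eq_some hd k)

lemma Recognizes.safeLoop_of_innerRun (hM : M.Recognizes LMain) (hs : u.foldl M.step s = s)
    {i : InnerSt} (hi : u.foldlM innerStep i = some i) : M.SafeLoop s u :=
  hM.safeLoop_of_coreRun hs (coreRun_of_innerRun hi 0 false)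

lemma Recognizes.exists_safeLoop_hasPattern [Finite Q] [Nonempty Q] (hM : M.Recognizes LMain) :
    ∃ s u, M.SafeLoop s u ∧ HasPattern u := by
  obtain ⟨s, k, hs⟩ := exists_flatten_replicate_loop M.step patternWord
  refine ⟨s, _, hM.safeLoop_of_y_notMem hs ?_, hasPattern_patternWord.of_infix ?_⟩
  · simp [patternWord, y_notMem_labelWord]
  · rw [List.replicate_succ, List.flatten_cons]
    exact (List.prefix_append _ _).isInfix

end Loops

section BottomCore

variable {Z : Set (Q × CoreSt)} {d d' : CoreSt}

lemma Recognizes.coreRun_ne_none_of_safeLoop (hM : M.Recognizes LMain)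
    (hZ : IsBottomComponent M.step coreStep [] Z) (hs : (s, d) ∈ Z) (hu : M.SafeLoop s u) :
    u.foldlM coreStep d ≠ none := by
  intro hd
  have hreset : [.y, .res 0].foldlM coreStep d = some (0, false, .p) := by
    rw [coreRun_y_cons]
    rfl
  obtain ⟨v, -, hv, hvd⟩ := hZ.exists_return hs (by simp) hreset
  have hloop : M.SafeLoop s ([.y, .res 0] ++ v) :=
    hM.safeLoop_of_coreRun hv (by rw [foldlM_append_of_eq_some hreset, hvd])
  have hpat : HasPattern (.res 0 :: (v ++ u)) :=
    hasPattern_of_coreRun_eq_none (by rw [foldlM_append_of_eq_some hvd, hd])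
  exact hM.not_hasPattern_of_safeLoop (hloop.append hu) (by simp)
    (hpat.of_infix ⟨[.y], [], by simp⟩)

lemma Recognizes.coreRun_ne_none_of_mem (hM : M.Recognizes LMain)
    (hZ : IsBottomComponent M.step coreStep [] Z) (hd : (s, d) ∈ Z) (hd' : (s, d') ∈ Z)
    (hu : u.foldlM coreStep d ≠ none) : u.foldlM coreStep d' ≠ none := by
  obtain ⟨e, he⟩ := Option.ne_none_iff_exists'.1 hu
  obtain ⟨v, -, hv, hvd⟩ := hZ.exists_return hd (by simp) he
  have hloop : M.SafeLoop s (u ++ v) :=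
    hM.safeLoop_of_coreRun hv (by rw [foldlM_append_of_eq_some he, hvd])
  exact fun hnone => hM.coreRun_ne_none_of_safeLoop hZ hd' hloop
    (foldlM_append_of_eq_none hnone v)

lemma Recognizes.core_eq_of_mem (hM : M.Recognizes LMain)
    (hZ : IsBottomComponent M.step coreStep [] Z) (hd : (s, d) ∈ Z) (hd' : (s, d') ∈ Z) :
    d = d' :=
  coreSt_ext fun _ => not_iff_not.1
    ⟨hM.coreRun_ne_none_of_mem hZ hd hd', hM.coreRun_ne_none_of_mem hZ hd' hd⟩

end BottomCore

section BottomClassifier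

variable {Y : Set (Q × InnerSt)} {i i' j : InnerSt} {v : List Al}

lemma Recognizes.exists_y_mem_safeLoop (hM : M.Recognizes LMain)
    (hY : IsBottomComponent M.step innerStep [] Y) (hs : (s, i) ∈ Y) :
    ∃ u, .y ∈ u ∧ M.SafeLoop s u := by
  have hi : (.y :: innerWord i).foldlM innerStep i = some i := by
    rw [innerRun_y_cons, innerRun_innerWord]
  obtain ⟨v, -, hv, hvi⟩ := hY.exists_return hs (by simp) hi
  exact ⟨.y :: innerWord i ++ v, by simp,
    hM.safeLoop_of_innerRun hv (by rw [foldlM_append_of_eq_some hi, hvi])⟩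

lemma Recognizes.exists_safeLoop_append (hM : M.Recognizes LMain)
    (hY : IsBottomComponent M.step innerStep [] Y) (hi : (s, i) ∈ Y) (hj : (s, j) ∈ Y)
    (hv : v.foldlM innerStep i = some i') :
    ∃ n, M.SafeLoop s (v ++ n) ∧ n.foldlM innerStep i' = some j := by
  obtain ⟨n, -, hn, hnj⟩ := hY.connected (hY.foldl_mem hi (by simp) hv) hj
  obtain ⟨k, -, hk, hki⟩ := hY.connected hj hi
  have hvn : (v ++ n).foldl M.step s = s := by rwa [List.foldl_append]
  have hloop : M.SafeLoop s (v ++ n ++ k) :=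
    hM.safeLoop_of_innerRun (i := i) (by rwa [List.foldl_append, hvn])
      (by rwa [List.append_assoc, foldlM_append_of_eq_some hv, foldlM_append_of_eq_some hnj])
  exact ⟨n, ⟨hvn, hloop.2.of_prefix (List.prefix_append _ k)⟩, hnj⟩

lemma Recognizes.not_separates (hM : M.Recognizes LMain)
    (hY : IsBottomComponent M.step innerStep [] Y) (hi : (s, i) ∈ Y) (hj : (s, j) ∈ Y) :
    ¬Separates i j := by
  intro h
  obtain ⟨γ₀, -, v₀, hv₀, hγ₀⟩ := h 0
  obtain ⟨γ₁, hne, v₁, hv₁, hγ₁⟩ := h γ₀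
  obtain ⟨n₀, hloop₀, hn₀⟩ := hM.exists_safeLoop_append hY hi hj hv₀
  obtain ⟨n₁, hloop₁, hn₁⟩ := hM.exists_safeLoop_append hY hi hj hv₁
  obtain ⟨z, hyz, hz⟩ := hM.exists_y_mem_safeLoop hY hi
  have hpat : HasPattern (v₀ ++ n₀ ++ (v₀ ++ n₀) ++ (v₁ ++ n₁) ++ (v₁ ++ n₁) ++ z) :=
    ⟨γ₀, γ₁, hne.symm, n₀ ++ v₀, n₀ ++ v₁, n₁ ++ v₁, .inl (append_mem_Lcl hn₀ hγ₀),
      append_mem_Lcl hn₀ hγ₁, append_mem_Lcl hn₁ hγ₁, v₀, n₁ ++ z, by simp⟩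
  exact hM.not_hasPattern_of_safeLoop
    ((((hloop₀.append hloop₀).append hloop₁).append hloop₁).append hz) (by simp [hyz]) hpat

lemma Recognizes.inner_eq_of_mem (hM : M.Recognizes LMain)
    (hY : IsBottomComponent M.step innerStep [] Y) (hi : (s, i) ∈ Y) (hj : (s, j) ∈ Y) :
    i = j := by
  by_contra hne
  exact (separates_or_separates hne).elim (hM.not_separates hY hi hj) (hM.not_separates hY hj hi)

end BottomClassifier

/-- A bottom component `carrier` of `M` times the core with respect to words without `y`, inside a
bottom component `ambient` with respect to all words. -/
structure CoreComponent (M : DetBuchi Al Q) where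
  carrier : Set (Q × CoreSt)
  ambient : Set (Q × CoreSt)
  isBottom_carrier : IsBottomComponent M.step coreStep [.y] carrier
  isBottom_ambient : IsBottomComponent M.step coreStep [] ambient
  carrier_subset_ambient : carrier ⊆ ambient

lemma nonempty_coreComponent [Finite Q] [Nonempty Q] (M : DetBuchi Al Q) :
    Nonempty M.CoreComponent := by
  obtain ⟨Z, hZ, -⟩ := exists_isBottomComponent M.step coreStep []
    (Classical.arbitrary Q, (0, false, .p))
  obtain ⟨x, hx⟩ := hZ.nonempty
  obtain ⟨B, hB, hxB⟩ := exists_isBottomComponent M.step coreStep [.y] x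
  exact ⟨⟨B, Z, hB, hZ, fun _ h => hZ.closed hx (hxB _ h).forget_avoiding⟩⟩

namespace CoreComponent

variable (B : M.CoreComponent)

/-- The states of `M` that occur in the component. -/
def states : Set Q :=
  Prod.fst '' B.carrier

/-- The states of `M` from which no word without `y` leads into the component. -/
def waiting : Set Q :=
  {x | ∀ u : List Al, .y ∉ u → u.foldl M.step x ∉ B.states}

/-- From `x`, the words that lead the core from the label `β` back to it lead into the component
only at core states that also carry the label `β`. -/
def Remembers (β : Fin 6) (x : Q) : Prop :=
  ∀ u : List Al, u.foldlM coreStep (β, false, .p) = some (β, false, .p) →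
    ∀ α fresh i, (u.foldl M.step x, (α, fresh, i)) ∈ B.carrier → (α, fresh) = (β, false)

variable {B} {d : CoreSt}

lemma foldl_mem_carrier {d' : CoreSt} (hs : (s, d) ∈ B.carrier) (hy : .y ∉ u)
    (hd : u.foldlM coreStep d = some d') : (u.foldl M.step s, d') ∈ B.carrier :=
  B.isBottom_carrier.foldl_mem hs (List.disjoint_singleton.2 hy) hd

lemma coreRun_ne_none_of_safeLoop (hM : M.Recognizes LMain) (hs : (s, d) ∈ B.carrier)
    (hu : M.SafeLoop s u) : u.foldlM coreStep d ≠ none :=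
  hM.coreRun_ne_none_of_safeLoop B.isBottom_ambient (B.carrier_subset_ambient hs) hu

variable (B) in
lemma exists_mem_carrier (d : CoreSt) : ∃ s, (s, d) ∈ B.carrier :=
  B.isBottom_carrier.exists_mem fun d' => by
    simpa only [List.disjoint_singleton] using exists_coreRun d' d

lemma foldl_mem_waiting (hM : M.Recognizes LMain) (hs : (s, d) ∈ B.carrier) (hy : .y ∉ u)
    (hd : u.foldlM coreStep d = none) : u.foldl M.step s ∈ B.waiting := by
  rintro v hyv ⟨⟨t, d'⟩, ht, rfl⟩
  obtain ⟨z, hyz, hz, -⟩ := B.isBottom_carrier.connected ht hs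
  have hloop : M.SafeLoop s (u ++ (v ++ z)) := by
    refine hM.safeLoop_of_y_notMem ?_ ?_
    · rwa [List.foldl_append, List.foldl_append]
    · simp [hy, hyv, List.disjoint_singleton.1 hyz]
  exact coreRun_ne_none_of_safeLoop hM hs hloop (foldlM_append_of_eq_none hd _)

lemma nonempty_waiting (hM : M.Recognizes LMain) : B.waiting.Nonempty := by
  obtain ⟨⟨s, d⟩, hs⟩ := B.isBottom_carrier.nonempty
  exact ⟨_, foldl_mem_waiting hM hs (by simp [patternWord, y_notMem_labelWord])
    (coreRun_eq_none_of_hasPattern hasPattern_patternWord d)⟩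

lemma exists_coreRun_of_not_remembers {β : Fin 6} {x : Q} (h : ¬B.Remembers β x) :
    ∃ u : List Al, u.foldlM coreStep (β, false, .p) = some (β, false, .p) ∧
      ∃ α fresh, (u.foldl M.step x, (α, fresh, .p)) ∈ B.carrier ∧ (α, fresh) ≠ (β, false) := by
  simp only [Remembers, not_forall] at h
  obtain ⟨u, hu, α, fresh, i, hmem, hne⟩ := h
  have hsync (i : InnerSt) := coreRun_of_innerRun (innerRun_syncWord i)
  refine ⟨u ++ syncWord, ?_, α, fresh, ?_, hne⟩
  · rw [foldlM_append_of_eq_some hu, hsync]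
  · rw [List.foldl_append]
    exact foldl_mem_carrier hmem (by simp [syncWord]) (hsync i α fresh)

lemma exists_mem_waiting_remembers [Finite Q] (hM : M.Recognizes LMain) (β : Fin 6) :
    ∃ x ∈ B.waiting, B.Remembers β x := by
  obtain ⟨x₀, hx₀⟩ := nonempty_waiting (B := B) hM
  obtain ⟨⟨x, hx⟩, -, hbottom⟩ := exists_bottom (V := B.waiting)
    (R := fun x x' => Reach M.step coreStep [] (x.1, (β, false, .p)) (x'.1, (β, false, .p)))
    (fun _ => .refl _) .trans ⟨x₀, hx₀⟩
  refine ⟨x, hx, by_contra fun hx => ?_⟩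
  obtain ⟨u, hu, α, fresh, hmem, hne⟩ := exists_coreRun_of_not_remembers hx
  set v := labelWord β ++ labelWord β with hv
  have hvβ : v.foldlM coreStep (β, false, .p) = some (β, false, .p) :=
    (coreRun_labelWord_twice β false β).trans (if_pos rfl)
  have hvα : v.foldlM coreStep (α, fresh, .p) = none :=
    (coreRun_labelWord_twice α fresh β).trans (if_neg hne)
  have hwait := foldl_mem_waiting hM hmem (by simp [hv, y_notMem_labelWord]) hvα
  obtain ⟨z, -, hz, hzβ⟩ := hbottom ⟨_, hwait⟩
    ((Reach.of_foldlM_eq_some (by simp) hu).trans (.of_foldlM_eq_some (by simp) hvβ))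
  have hloop : M.SafeLoop (u.foldl M.step x) (v ++ (z ++ u)) := by
    refine hM.safeLoop_of_coreRun (d := (β, false, .p)) ?_ ?_
    · rw [List.foldl_append, List.foldl_append, hz]
    · rw [foldlM_append_of_eq_some hvβ, foldlM_append_of_eq_some hzβ, hu]
  exact coreRun_ne_none_of_safeLoop hM hmem hloop (foldlM_append_of_eq_none hvα _)

lemma waiting_subset : B.waiting ⊆ B.statesᶜ :=
  fun _ hx => hx [] (by simp)

lemma foldl_notMem_states_of_remembers {x : Q} {β β' : Fin 6} (hβ : B.Remembers β x)
    (hβ' : B.Remembers β' x) (hne : β ≠ β') {i : InnerSt} (hu : u.foldlM innerStep .p = some i) :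
    u.foldl M.step x ∉ B.states := by
  rintro ⟨⟨_, α, fresh, j⟩, hmem, rfl⟩
  have hmem' : ((u ++ syncWord).foldl M.step x, (α, fresh, .p)) ∈ B.carrier := by
    rw [List.foldl_append]
    exact foldl_mem_carrier hmem (by simp [syncWord])
      (coreRun_of_innerRun (innerRun_syncWord j) α fresh)
  have hrun (γ : Fin 6) : (u ++ syncWord).foldlM coreStep (γ, false, .p) = some (γ, false, .p) :=
    coreRun_of_innerRun (by rw [foldlM_append_of_eq_some hu, innerRun_syncWord]) γ false
  have heq := (hβ _ (hrun β) _ _ _ hmem').symm.trans (hβ' _ (hrun β') _ _ _ hmem')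
  exact hne (congrArg Prod.fst heq)

lemma six_le_ncard_compl_states_of_innerRun [Finite Q] (hM : M.Recognizes LMain) {x : Q}
    (hx : ∀ (u : List Al) i, u.foldlM innerStep .p = some i → u.foldl M.step x ∉ B.states) :
    6 ≤ B.statesᶜ.ncard := by
  have : Nonempty Q := ⟨x⟩
  obtain ⟨w, u, hu, hpat⟩ := hM.exists_safeLoop_hasPattern
  obtain ⟨Y, hY, hxY⟩ := exists_isBottomComponent M.step innerStep [] (x, .p)
  choose g hg using fun j => hY.exists_mem (d' := j) fun i =>
    ⟨.y :: innerWord j, by simp, by rw [innerRun_y_cons, innerRun_innerWord]⟩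
  have hg_inj : Function.Injective g := fun i j hij =>
    hM.inner_eq_of_mem hY (hg i) (hij ▸ hg j)
  have hgC (i : InnerSt) : g i ∈ B.statesᶜ := by
    obtain ⟨v, -, hv, hvi⟩ := hxY _ (hg i)
    exact fun hmem => hx v i hvi (hv ▸ hmem)
  have hwC : w ∈ B.statesᶜ := by
    rintro ⟨⟨_, d⟩, hmem, rfl⟩
    exact coreRun_ne_none_of_safeLoop hM hmem hu (coreRun_eq_none_of_hasPattern hpat d)
  have hwg : w ∉ Set.range g := by
    rintro ⟨i, rfl⟩
    obtain ⟨z, hyz, hz⟩ := hM.exists_y_mem_safeLoop hY (hg i)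
    exact hM.not_hasPattern_of_safeLoop (hu.append hz) (by simp [hyz])
      (hpat.of_infix (List.prefix_append u z).isInfix)
  have hcard := card_le_ncard_of_injective (g := fun o : Option InnerSt => o.elim w g)
    (S := B.statesᶜ) (Option.injective_iff.2 ⟨hg_inj, hwg⟩) (Option.rec hwC hgC)
  rwa [Nat.card_eq_fintype_card] at hcard

lemma six_le_ncard_compl_states [Finite Q] (hM : M.Recognizes LMain) :
    6 ≤ B.statesᶜ.ncard := by
  choose x hxw hx using exists_mem_waiting_remembers (B := B) hM
  by_cases hinj : Function.Injective x
  · simpa using card_le_ncard_of_injective hinj fun β => waiting_subset (hxw β)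
  · obtain ⟨β, β', heq, hne⟩ := Function.not_injective_iff.1 hinj
    exact six_le_ncard_compl_states_of_innerRun hM fun u i hu =>
      foldl_notMem_states_of_remembers (hx β) (heq ▸ hx β') hne hu

lemma sixty_le_ncard_states [Finite Q] (hM : M.Recognizes LMain) : 60 ≤ B.states.ncard := by
  choose g hg using B.exists_mem_carrier
  have hg_inj : Function.Injective g := fun d d' hdd' =>
    hM.core_eq_of_mem B.isBottom_ambient (B.carrier_subset_ambient (hg d))
      (B.carrier_subset_ambient (hdd' ▸ hg d'))
  have hcard := card_le_ncard_of_injective hg_inj fun d => Set.mem_image_of_mem Prod.fst (hg d)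
  rwa [Nat.card_eq_fintype_card] at hcard

end CoreComponent

lemma Recognizes.le_card [Finite Q] [Nonempty Q] (hM : M.Recognizes LMain) : 66 ≤ Nat.card Q := by
  obtain ⟨B⟩ := M.nonempty_coreComponent
  calc 66 = 60 + 6 := rfl
    _ ≤ B.states.ncard + B.statesᶜ.ncard :=
      add_le_add (B.sixty_le_ncard_states hM) (B.six_le_ncard_compl_states hM)
    _ = Nat.card Q := Set.ncard_add_ncard_compl _

end DetBuchi

/-- Every deterministic coBüchi automaton recognising the
complement of `L_main` has at least 66 states. -/
theorem det_cobuchi_for_compl_LMain_ge_66 {Q : Type} [Fintype Q] (A : BuchiAutomaton Al Q)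
    (hdet : A.Deterministic) (hlang : A.CoLang = LMainᶜ) :
    66 ≤ Fintype.card Q := by
  have hcomplete : A.completion.Lang A.init = LMain := by
    rw [A.lang_completion hdet (hlang ▸ exists_append_notMem_LMain), hlang, compl_compl]
  have hrec : (A.completion.reachable A.init).Recognizes LMain := by
    rw [← hcomplete]
    refine DetBuchi.recognizes_reachable ?_
    rw [hcomplete]
    exact append_mem_LMain_iff
  have : Nonempty (A.completion.reachableStates A.init) := ⟨⟨A.init, [], rfl⟩⟩
  calc 66 ≤ Nat.card (A.completion.reachableStates A.init) := hrec.le_card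
    _ ≤ Nat.card Q := Finite.card_subtype_le _
    _ = Fintype.card Q := Nat.card_eq_fintype_card
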